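/- There exists a symmetric measure that is universally optimal among all measures. Moreover, for any measure ξ, its symmetrization ξ* — the measure with weights p*_s = (t!)⁻¹ Σ_σ p_{σ∘s}, the sum running over all permutations σ of the treatments — is a symmetric measure, and for every function Φ from t×t real symmetric matrices to ℝ that is concave, nondecreasing with respect to the Loewner order and invariant under simultaneous permutation of rows and columns, and for all generalized inverses G*, G of C_{ξ*11}, C_{ξ11} respectively, one has Φ(C_{ξ*00} − C_{ξ*01}G*C_{ξ*10}) ≥ Φ(C_{ξ00} − C_{ξ01}GC_{ξ10}). -/

import Mathlib

/-!
The information matrix of a measure is the generalized Schur complement of a positive semidefinite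
joint information matrix that is linear in the measure. Completing the square exhibits a generalized
Schur complement as the Loewner minimum of quadratic maps `X ↦ [1; X]ᵀ M [1; X]`, so it is concave
in `M`; relabeling treatments acts on it by simultaneous permutations of rows and columns. Hence
the information matrix of `ξ*` dominates the average of the permuted information matrices of `ξ`,
and a concave, permutation invariant criterion does not decrease under that averaging.

For a symmetric measure the information matrix is permutation invariant with zero row sums, that is,
a multiple of the centering matrix `I - J/t`, so symmetric measures are ordered by the trace alone.
The trace is an infimum of continuous functions of the measure, hence upper semicontinuous, and
attains its maximum on the compact set of symmetric measures.
-/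

open Matrix

namespace TwoDim

/-- The set of plots of an `a × b` block. -/
abbrev Plot (a b : ℕ) := Fin a × Fin b

/-- A block array: an assignment of one of `t` treatments to each plot. -/
abbrev BlockArray (a b t : ℕ) := Plot a b → Fin t

/-- The all-ones matrix. -/
def Jmat (n : Type*) : Matrix n n ℝ := Matrix.of fun _ _ => 1

/-- `B_m = I - J/m`. -/
noncomputable def Bmat (n : Type*) [Fintype n] [DecidableEq n] : Matrix n n ℝ :=
  1 - ((Fintype.card n : ℝ))⁻¹ • Jmat n

variable {a b t : ℕ}

/-- The treatment incidence matrix `T_s`. -/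
def Tmat (s : BlockArray a b t) : Matrix (Plot a b) (Fin t) ℝ :=
  Matrix.of fun q k => if s q = k then 1 else 0

/-- Two plots are neighbors if they agree in one coordinate and differ by 1 in the other. -/
def Neighbor (q r : Plot a b) : Prop :=
  (q.1 = r.1 ∧ (q.2.val + 1 = r.2.val ∨ r.2.val + 1 = q.2.val)) ∨
  (q.2 = r.2 ∧ (q.1.val + 1 = r.1.val ∨ r.1.val + 1 = q.1.val))

instance (q r : Plot a b) : Decidable (Neighbor q r) := by
  unfold Neighbor; infer_instance

/-- The adjacency matrix of the neighbor relation. -/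
def Mmat (a b : ℕ) : Matrix (Plot a b) (Plot a b) ℝ :=
  Matrix.of fun q r => if Neighbor q r then 1 else 0

/-- `F_s = M T_s`. -/
def Fmat (s : BlockArray a b t) : Matrix (Plot a b) (Fin t) ℝ :=
  Mmat a b * Tmat s

/-- `B̃ = Σ⁻¹ − Σ⁻¹ J Σ⁻¹ / (1'Σ⁻¹1)`. -/
noncomputable def Btilde (Sig : Matrix (Plot a b) (Plot a b) ℝ) :
    Matrix (Plot a b) (Plot a b) ℝ :=
  Sig⁻¹ - (∑ i, ∑ j, Sig⁻¹ i j)⁻¹ • (Sig⁻¹ * Jmat (Plot a b) * Sig⁻¹)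

/-- `C_{s00} = T_s' W T_s` (with `W` playing the role of `B̃`). -/
def Cs00 (W : Matrix (Plot a b) (Plot a b) ℝ) (s : BlockArray a b t) :
    Matrix (Fin t) (Fin t) ℝ := (Tmat s)ᵀ * W * Tmat s

/-- `C_{s01} = T_s' W F_s`. -/
def Cs01 (W : Matrix (Plot a b) (Plot a b) ℝ) (s : BlockArray a b t) :
    Matrix (Fin t) (Fin t) ℝ := (Tmat s)ᵀ * W * Fmat s

/-- `C_{s11} = F_s' W F_s`. -/
def Cs11 (W : Matrix (Plot a b) (Plot a b) ℝ) (s : BlockArray a b t) :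
    Matrix (Fin t) (Fin t) ℝ := (Fmat s)ᵀ * W * Fmat s

/-- `c_{s00} = tr(B_t C_{s00})`. -/
noncomputable def cs00 (W : Matrix (Plot a b) (Plot a b) ℝ) (s : BlockArray a b t) : ℝ :=
  Matrix.trace (Bmat (Fin t) * Cs00 W s)

noncomputable def cs01 (W : Matrix (Plot a b) (Plot a b) ℝ) (s : BlockArray a b t) : ℝ :=
  Matrix.trace (Bmat (Fin t) * Cs01 W s)

noncomputable def cs11 (W : Matrix (Plot a b) (Plot a b) ℝ) (s : BlockArray a b t) : ℝ :=
  Matrix.trace (Bmat (Fin t) * Cs11 W s)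

/-- The quadratic `q_s(x) = c_{s00} + 2 c_{s01} x + c_{s11} x²`. -/
noncomputable def qpoly (W : Matrix (Plot a b) (Plot a b) ℝ) (s : BlockArray a b t) (x : ℝ) : ℝ :=
  cs00 W s + 2 * cs01 W s * x + cs11 W s * x ^ 2

/-- A measure on the set of block arrays: nonnegative weights summing to one. -/
def IsMeasure (ξ : BlockArray a b t → ℝ) : Prop :=
  (∀ s, 0 ≤ ξ s) ∧ ∑ s, ξ s = 1

noncomputable def Cm00 (W : Matrix (Plot a b) (Plot a b) ℝ) (ξ : BlockArray a b t → ℝ) :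
    Matrix (Fin t) (Fin t) ℝ := ∑ s, ξ s • Cs00 W s

noncomputable def Cm01 (W : Matrix (Plot a b) (Plot a b) ℝ) (ξ : BlockArray a b t → ℝ) :
    Matrix (Fin t) (Fin t) ℝ := ∑ s, ξ s • Cs01 W s

noncomputable def Cm11 (W : Matrix (Plot a b) (Plot a b) ℝ) (ξ : BlockArray a b t → ℝ) :
    Matrix (Fin t) (Fin t) ℝ := ∑ s, ξ s • Cs11 W s

noncomputable def cm00 (W : Matrix (Plot a b) (Plot a b) ℝ) (ξ : BlockArray a b t → ℝ) : ℝ :=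
  ∑ s, ξ s * cs00 W s

noncomputable def cm01 (W : Matrix (Plot a b) (Plot a b) ℝ) (ξ : BlockArray a b t → ℝ) : ℝ :=
  ∑ s, ξ s * cs01 W s

noncomputable def cm11 (W : Matrix (Plot a b) (Plot a b) ℝ) (ξ : BlockArray a b t → ℝ) : ℝ :=
  ∑ s, ξ s * cs11 W s

/-- `q*_ξ = c_{ξ00} − c_{ξ01}²/c_{ξ11}`. -/
noncomputable def qstar (W : Matrix (Plot a b) (Plot a b) ℝ) (ξ : BlockArray a b t → ℝ) : ℝ :=
  cm00 W ξ - (cm01 W ξ) ^ 2 / cm11 W ξ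

/-- `G` is a generalized inverse of `A`. -/
def IsGenInv (A G : Matrix (Fin t) (Fin t) ℝ) : Prop := A * G * A = A

/-- Information matrix `C_{ξ00} − C_{ξ01} G C_{ξ10}` computed with a generalized inverse `G`. -/
noncomputable def InfoMat (W : Matrix (Plot a b) (Plot a b) ℝ) (ξ : BlockArray a b t → ℝ)
    (G : Matrix (Fin t) (Fin t) ℝ) : Matrix (Fin t) (Fin t) ℝ :=
  Cm00 W ξ - Cm01 W ξ * G * (Cm01 W ξ)ᵀ

/-- A criterion `Φ` on `t×t` real symmetric matrices: concave, Loewner-nondecreasing, and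
invariant under simultaneous permutations of rows and columns. -/
def GoodPhi (t : ℕ) (Φ : Matrix (Fin t) (Fin t) ℝ → ℝ) : Prop :=
  (∀ A B : Matrix (Fin t) (Fin t) ℝ, A.IsSymm → B.IsSymm → ∀ α : ℝ, 0 ≤ α → α ≤ 1 →
      α * Φ A + (1 - α) * Φ B ≤ Φ (α • A + (1 - α) • B)) ∧
  (∀ A B : Matrix (Fin t) (Fin t) ℝ, A.IsSymm → B.IsSymm → (B - A).PosSemidef → Φ A ≤ Φ B) ∧
  (∀ (σ : Equiv.Perm (Fin t)) (C : Matrix (Fin t) (Fin t) ℝ), Φ (C.submatrix σ σ) = Φ C)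

/-- Universal optimality of a measure `ξ`. -/
def UnivOptimal (W : Matrix (Plot a b) (Plot a b) ℝ) (ξ : BlockArray a b t → ℝ) : Prop :=
  ∀ η : BlockArray a b t → ℝ, IsMeasure η →
    ∀ G H : Matrix (Fin t) (Fin t) ℝ, IsGenInv (Cm11 W ξ) G → IsGenInv (Cm11 W η) H →
      ∀ Φ : Matrix (Fin t) (Fin t) ℝ → ℝ, GoodPhi t Φ →
        Φ (InfoMat W η H) ≤ Φ (InfoMat W ξ G)

/-- A measure is symmetric if it is invariant under relabeling of the treatments. -/
def IsSymmetricMeasure (ξ : BlockArray a b t → ℝ) : Prop :=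
  ∀ (σ : Equiv.Perm (Fin t)) (s : BlockArray a b t), ξ (fun q => σ (s q)) = ξ s

/-- A matrix is completely symmetric if it is of the form `αI + βJ`. -/
def ComplSym (A : Matrix (Fin t) (Fin t) ℝ) : Prop :=
  ∃ α β : ℝ, A = α • (1 : Matrix (Fin t) (Fin t) ℝ) + β • Jmat (Fin t)

/-- A measure is pseudo symmetric if `C_{ξ00}`, `C_{ξ01}`, `C_{ξ11}` are completely symmetric. -/
def PseudoSym (W : Matrix (Plot a b) (Plot a b) ℝ) (ξ : BlockArray a b t → ℝ) : Prop :=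
  ComplSym (Cm00 W ξ) ∧ ComplSym (Cm01 W ξ) ∧ ComplSym (Cm11 W ξ)

/-- `r(x) = max_{s∈S} q_s(x)`. -/
noncomputable def rfun {a b : ℕ} (t : ℕ) (W : Matrix (Plot a b) (Plot a b) ℝ) (x : ℝ) : ℝ :=
  sSup (Set.range fun s : BlockArray a b t => qpoly W s x)

/-- `min_{s∈S} q_s(x)`. -/
noncomputable def rmin {a b : ℕ} (t : ℕ) (W : Matrix (Plot a b) (Plot a b) ℝ) (x : ℝ) : ℝ :=
  sInf (Set.range fun s : BlockArray a b t => qpoly W s x)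

/-- Number of plots assigned treatment `k` by `s`. -/
noncomputable def f0 (s : BlockArray a b t) (k : Fin t) : ℕ :=
  {q : Plot a b | s q = k}.ncard

/-- Replications of `k` among the columns `1,…,b−1`. -/
noncomputable def f1 (s : BlockArray a b t) (k : Fin t) : ℕ :=
  {q : Plot a b | s q = k ∧ q.2.val + 1 < b}.ncard

/-- Replications of `k` among the columns `2,…,b`. -/
noncomputable def f2 (s : BlockArray a b t) (k : Fin t) : ℕ :=
  {q : Plot a b | s q = k ∧ 1 ≤ q.2.val}.ncard

/-- Replications of `k` among the rows `1,…,a−1`. -/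
noncomputable def f3 (s : BlockArray a b t) (k : Fin t) : ℕ :=
  {q : Plot a b | s q = k ∧ q.1.val + 1 < a}.ncard

/-- Replications of `k` among the rows `2,…,a`. -/
noncomputable def f4 (s : BlockArray a b t) (k : Fin t) : ℕ :=
  {q : Plot a b | s q = k ∧ 1 ≤ q.1.val}.ncard

noncomputable def fc (s : BlockArray a b t) : ℕ → Fin t → ℕ
  | 0 => f0 s
  | 1 => f1 s
  | 2 => f2 s
  | 3 => f3 s
  | 4 => f4 s
  | _ => fun _ => 0

/-- `h^{uv}_s = Σ_k f^u_{s,k} f^v_{s,k}`. -/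
noncomputable def hval (s : BlockArray a b t) (u v : ℕ) : ℝ :=
  ∑ k : Fin t, (fc s u k : ℝ) * (fc s v k : ℝ)

noncomputable def h00 (s : BlockArray a b t) : ℝ := hval s 0 0

noncomputable def h1 (s : BlockArray a b t) : ℝ :=
  hval s 0 1 + hval s 0 2 + hval s 0 3 + hval s 0 4

noncomputable def h2 (s : BlockArray a b t) : ℝ :=
  hval s 1 1 + hval s 2 2 + hval s 3 3 + hval s 4 4

noncomputable def h3 (s : BlockArray a b t) : ℝ :=
  hval s 1 2 + hval s 1 3 + hval s 1 4 + hval s 2 3 + hval s 2 4 + hval s 3 4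

/-- `z¹_{s,r}`: horizontally adjacent pairs of plots receiving the same treatment. -/
noncomputable def zr1 (s : BlockArray a b t) : ℕ :=
  {qr : Plot a b × Plot a b |
    qr.1.1 = qr.2.1 ∧ qr.1.2.val + 1 = qr.2.2.val ∧ s qr.1 = s qr.2}.ncard

noncomputable def zr2 (s : BlockArray a b t) : ℕ :=
  {qr : Plot a b × Plot a b |
    qr.1.1 = qr.2.1 ∧ qr.1.2.val + 2 = qr.2.2.val ∧ s qr.1 = s qr.2}.ncard

noncomputable def zc1 (s : BlockArray a b t) : ℕ :=
  {qr : Plot a b × Plot a b |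
    qr.1.2 = qr.2.2 ∧ qr.1.1.val + 1 = qr.2.1.val ∧ s qr.1 = s qr.2}.ncard

noncomputable def zc2 (s : BlockArray a b t) : ℕ :=
  {qr : Plot a b × Plot a b |
    qr.1.2 = qr.2.2 ∧ qr.1.1.val + 2 = qr.2.1.val ∧ s qr.1 = s qr.2}.ncard

/-- pairs `(i,j)`, `(i−1,j+1)` with the same treatment. -/
noncomputable def zd1 (s : BlockArray a b t) : ℕ :=
  {qr : Plot a b × Plot a b |
    qr.2.1.val + 1 = qr.1.1.val ∧ qr.1.2.val + 1 = qr.2.2.val ∧ s qr.1 = s qr.2}.ncard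

/-- pairs `(i,j)`, `(i+1,j+1)` with the same treatment. -/
noncomputable def zd2 (s : BlockArray a b t) : ℕ :=
  {qr : Plot a b × Plot a b |
    qr.1.1.val + 1 = qr.2.1.val ∧ qr.1.2.val + 1 = qr.2.2.val ∧ s qr.1 = s qr.2}.ncard

noncomputable def z1 (s : BlockArray a b t) : ℝ := 2 * zr1 s + 2 * zc1 s

noncomputable def z2 (s : BlockArray a b t) : ℝ :=
  2 * zr2 s + 2 * zc2 s + 4 * zd1 s + 4 * zd2 s

/-- `η = 4p − 2a − 2b − 2(8ab − 7a − 7b + 4)/t + 4(2p − a − b)²/(pt)` where `p = ab`. -/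
noncomputable def eta (a b t : ℕ) : ℝ :=
  4 * ((a : ℝ) * b) - 2 * a - 2 * b - 2 * (8 * (a : ℝ) * b - 7 * a - 7 * b + 4) / t +
    4 * (2 * (a : ℝ) * b - a - b) ^ 2 / (((a : ℝ) * b) * t)

/-- A corner plot of the `a × b` block. -/
def IsCorner (q : Plot a b) : Prop :=
  (q.1.val = 0 ∨ q.1.val + 1 = a) ∧ (q.2.val = 0 ∨ q.2.val + 1 = b)

/-- Treatment `k` is significant in `s`: it occupies exactly two plots, which are
neighbors, at least one of them being a corner plot. -/
def Significant (s : BlockArray a b t) (k : Fin t) : Prop :=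
  ∃ u v : Plot a b, u ≠ v ∧ {q : Plot a b | s q = k} = {u, v} ∧
    Neighbor u v ∧ (IsCorner u ∨ IsCorner v)

/-- Treatment `k` is strictly significant in `s`: both of its two plots are corners. -/
def StrictSignificant (s : BlockArray a b t) (k : Fin t) : Prop :=
  ∃ u v : Plot a b, u ≠ v ∧ {q : Plot a b | s q = k} = {u, v} ∧
    Neighbor u v ∧ IsCorner u ∧ IsCorner v

/-- `Q_i`: block arrays with exactly `i` significant treatments in which every other
treatment appears at most once. -/
def Qset (a b t : ℕ) (i : ℕ) : Set (BlockArray a b t) :=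
  {s | {k : Fin t | Significant s k}.ncard = i ∧
       ∀ k : Fin t, ¬ Significant s k → f0 s k ≤ 1}

/-- `Q_j*`: members of `Q_j` whose significant treatments are all strictly significant. -/
def QsetStar (a b t : ℕ) (j : ℕ) : Set (BlockArray a b t) :=
  {s | s ∈ Qset a b t j ∧ ∀ k : Fin t, Significant s k → StrictSignificant s k}

/-- Treatment `k` is connected in `s`. -/
def ConnectedIn (s : BlockArray a b t) (k : Fin t) : Prop :=
  ∀ q r : Plot a b, s q = k → s r = k →
    Relation.ReflTransGen (fun u v => Neighbor u v ∧ s u = k ∧ s v = k) q r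

/-- The symmetrization `ξ*` of a measure `ξ`: `p*_s = (t!)⁻¹ Σ_σ p_{σ∘s}`. -/
noncomputable def symmetrize (ξ : BlockArray a b t → ℝ) : BlockArray a b t → ℝ :=
  fun s => (∑ σ : Equiv.Perm (Fin t), ξ (fun q => σ (s q))) / (Nat.factorial t)

section GeneralizedSchur

variable {m n ι 𝕜 : Type*} [Fintype n] [RCLike 𝕜] {M : Matrix (m ⊕ n) (m ⊕ n) 𝕜}
  {G H : Matrix n n 𝕜}

open scoped ComplexOrder MatrixOrder

/-- The generalized Schur complement `A - B G C` of the block matrix `[[A, B], [C, D]]`, where `G`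
is meant to be a generalized inverse of the corner `D`. -/
def genSchur (M : Matrix (m ⊕ n) (m ⊕ n) 𝕜) (G : Matrix n n 𝕜) : Matrix m m 𝕜 :=
  M.toBlocks₁₁ - M.toBlocks₁₂ * G * M.toBlocks₂₁

open scoped Matrix.Norms.L2Operator in
theorem toBlocks₁₂_mul_eq_zero [Finite m] {l : Type*} (hM : M.PosSemidef) {X : Matrix n l 𝕜}
    (hX : M.toBlocks₂₂ * X = 0) : M.toBlocks₁₂ * X = 0 := by
  classical
  cases nonempty_fintype m
  obtain ⟨N, rfl⟩ := CStarAlgebra.nonneg_iff_eq_star_mul_self.mp hM.nonneg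
  have hNX : N.toCols₂ * X = 0 := (conjTranspose_mul_self_mul_eq_zero _ _).mp hX
  change N.toCols₁ᴴ * N.toCols₂ * X = 0
  rw [Matrix.mul_assoc, hNX, Matrix.mul_zero]

theorem toBlocks₁₂_mul_mul_toBlocks₂₂ [Finite m] (hM : M.PosSemidef)
    (hG : M.toBlocks₂₂ * G * M.toBlocks₂₂ = M.toBlocks₂₂) :
    M.toBlocks₁₂ * G * M.toBlocks₂₂ = M.toBlocks₁₂ := by
  classical
  have h : M.toBlocks₁₂ * (G * M.toBlocks₂₂ - 1) = 0 :=
    toBlocks₁₂_mul_eq_zero hM <| by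
      rw [Matrix.mul_sub, ← Matrix.mul_assoc, hG, Matrix.mul_one, sub_self]
  rwa [Matrix.mul_sub, ← Matrix.mul_assoc, Matrix.mul_one, sub_eq_zero] at h

theorem mul_conjTranspose_mul_self {D : Matrix n n 𝕜} (hD : D.IsHermitian) (hG : D * G * D = D) :
    D * Gᴴ * D = D := by
  simpa only [conjTranspose_mul, hD.eq, Matrix.mul_assoc] using congrArg conjTranspose hG

theorem toBlocks₂₂_mul_mul_toBlocks₂₁ [Finite m] (hM : M.PosSemidef)
    (hG : M.toBlocks₂₂ * G * M.toBlocks₂₂ = M.toBlocks₂₂) :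
    M.toBlocks₂₂ * G * M.toBlocks₂₁ = M.toBlocks₂₁ := by
  have hD : M.toBlocks₂₂.IsHermitian := hM.isHermitian.submatrix Sum.inr
  have hB : M.toBlocks₁₂ᴴ = M.toBlocks₂₁ := congrArg toBlocks₂₁ hM.isHermitian.eq
  simpa only [conjTranspose_mul, conjTranspose_conjTranspose, hD.eq, hB, Matrix.mul_assoc] using
    congrArg conjTranspose (toBlocks₁₂_mul_mul_toBlocks₂₂ hM (mul_conjTranspose_mul_self hD hG))

theorem genSchur_congr [Finite m] (hM : M.PosSemidef)
    (hG : M.toBlocks₂₂ * G * M.toBlocks₂₂ = M.toBlocks₂₂)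
    (hH : M.toBlocks₂₂ * H * M.toBlocks₂₂ = M.toBlocks₂₂) : genSchur M G = genSchur M H := by
  have : M.toBlocks₁₂ * G * M.toBlocks₂₁ = M.toBlocks₁₂ * H * M.toBlocks₂₁ := calc
    _ = M.toBlocks₁₂ * G * (M.toBlocks₂₂ * H * M.toBlocks₂₁) := by
      rw [toBlocks₂₂_mul_mul_toBlocks₂₁ hM hH]
    _ = M.toBlocks₁₂ * G * M.toBlocks₂₂ * H * M.toBlocks₂₁ := by simp only [Matrix.mul_assoc]
    _ = _ := by rw [toBlocks₁₂_mul_mul_toBlocks₂₂ hM hG]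
  rw [genSchur, genSchur, this]

theorem genSchur_submatrix {m' n' : Type*} [Fintype n'] (e : m' → m) (f : n' ≃ n) :
    genSchur (M.submatrix (Sum.map e f) (Sum.map e f)) (G.submatrix f f) =
      (genSchur M G).submatrix e e := by
  change _ - M.toBlocks₁₂.submatrix e f * G.submatrix f f * M.toBlocks₂₁.submatrix f e = _
  rw [submatrix_mul_equiv, submatrix_mul_equiv]
  rfl

theorem submatrix_mul_mul_self {n' : Type*} [Fintype n'] {D : Matrix n n 𝕜} (hG : D * G * D = D)
    (f : n' ≃ n) : D.submatrix f f * G.submatrix f f * D.submatrix f f = D.submatrix f f := by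
  rw [submatrix_mul_equiv, submatrix_mul_equiv, hG]

theorem genSchur_mulVec_eq_zero [Fintype m] {v : m → 𝕜} (hv : M *ᵥ Sum.elim v 0 = 0) :
    genSchur M G *ᵥ v = 0 := by
  rw [← fromBlocks_toBlocks M, fromBlocks_mulVec] at hv
  have hA : M.toBlocks₁₁ *ᵥ v = 0 := by simpa using congrArg (· ∘ Sum.inl) hv
  have hC : M.toBlocks₂₁ *ᵥ v = 0 := by simpa using congrArg (· ∘ Sum.inr) hv
  rw [genSchur, sub_mulVec, ← mulVec_mulVec, hA, hC, mulVec_zero, sub_zero]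

section BlockForm

variable [Fintype m] [DecidableEq m]

/-- The matrix-valued quadratic map `X ↦ [1; X]ᴴ M [1; X]`, of which the generalized Schur
complement is the Loewner minimum. -/
def blockForm (M : Matrix (m ⊕ n) (m ⊕ n) 𝕜) (X : Matrix n m 𝕜) : Matrix m m 𝕜 :=
  fromCols (1 : Matrix m m 𝕜) Xᴴ * M * fromRows (1 : Matrix m m 𝕜) X

theorem blockForm_eq_add (M : Matrix (m ⊕ n) (m ⊕ n) 𝕜) (X : Matrix n m 𝕜) :
    blockForm M X =
      M.toBlocks₁₁ + Xᴴ * M.toBlocks₂₁ + M.toBlocks₁₂ * X + Xᴴ * M.toBlocks₂₂ * X := by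
  conv_lhs => rw [blockForm, ← fromBlocks_toBlocks M, fromCols_mul_fromBlocks,
    fromCols_mul_fromRows]
  simp only [Matrix.one_mul, Matrix.mul_one, Matrix.add_mul, add_assoc]

theorem posSemidef_blockForm (hM : M.PosSemidef) (X : Matrix n m 𝕜) :
    (blockForm M X).PosSemidef := by
  have h := hM.conjTranspose_mul_mul_same (fromRows (1 : Matrix m m 𝕜) X)
  rwa [conjTranspose_fromRows_eq_fromCols_conjTranspose, conjTranspose_one] at h

theorem blockForm_sub_genSchur (hM : M.PosSemidef)
    (hG : M.toBlocks₂₂ * G * M.toBlocks₂₂ = M.toBlocks₂₂) (X : Matrix n m 𝕜) :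
    blockForm M X - genSchur M G =
      (X + G * M.toBlocks₂₁)ᴴ * M.toBlocks₂₂ * (X + G * M.toBlocks₂₁) := by
  have hD : M.toBlocks₂₂.IsHermitian := hM.isHermitian.submatrix Sum.inr
  have hC : M.toBlocks₂₁ᴴ = M.toBlocks₁₂ := congrArg toBlocks₁₂ hM.isHermitian.eq
  have hBGD : M.toBlocks₁₂ * Gᴴ * M.toBlocks₂₂ = M.toBlocks₁₂ :=
    toBlocks₁₂_mul_mul_toBlocks₂₂ hM (mul_conjTranspose_mul_self hD hG)
  have hDGC : Xᴴ * M.toBlocks₂₂ * (G * M.toBlocks₂₁) = Xᴴ * M.toBlocks₂₁ := by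
    rw [Matrix.mul_assoc, ← Matrix.mul_assoc _ G, toBlocks₂₂_mul_mul_toBlocks₂₁ hM hG]
  rw [blockForm_eq_add, genSchur, conjTranspose_add, conjTranspose_mul, hC]
  simp only [Matrix.add_mul, Matrix.mul_add, hBGD, hDGC, Matrix.mul_assoc M.toBlocks₁₂ G]
  abel

theorem genSchur_le_blockForm (hM : M.PosSemidef)
    (hG : M.toBlocks₂₂ * G * M.toBlocks₂₂ = M.toBlocks₂₂) (X : Matrix n m 𝕜) :
    genSchur M G ≤ blockForm M X := by
  rw [Matrix.le_iff, blockForm_sub_genSchur hM hG]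
  exact PosSemidef.conjTranspose_mul_mul_same (hM.submatrix Sum.inr) _

theorem genSchur_eq_blockForm (hM : M.PosSemidef)
    (hG : M.toBlocks₂₂ * G * M.toBlocks₂₂ = M.toBlocks₂₂) :
    genSchur M G = blockForm M (-(G * M.toBlocks₂₁)) := by
  have h := blockForm_sub_genSchur hM hG (-(G * M.toBlocks₂₁))
  rw [neg_add_cancel, Matrix.mul_zero] at h
  exact (sub_eq_zero.mp h).symm

theorem sum_smul_genSchur_le_blockForm (s : Finset ι) {w : ι → 𝕜} (hw : ∀ i ∈ s, 0 ≤ w i)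
    {M : ι → Matrix (m ⊕ n) (m ⊕ n) 𝕜} {G : ι → Matrix n n 𝕜} (hM : ∀ i ∈ s, (M i).PosSemidef)
    (hG : ∀ i ∈ s, (M i).toBlocks₂₂ * G i * (M i).toBlocks₂₂ = (M i).toBlocks₂₂)
    (X : Matrix n m 𝕜) :
    ∑ i ∈ s, w i • genSchur (M i) (G i) ≤ blockForm (∑ i ∈ s, w i • M i) X := calc
  _ ≤ ∑ i ∈ s, w i • blockForm (M i) X := Finset.sum_le_sum fun i hi =>
    smul_le_smul_of_nonneg_left (genSchur_le_blockForm (hM i hi) (hG i hi) X) (hw i hi)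
  _ = _ := by
    simp only [blockForm, Matrix.mul_sum, Matrix.sum_mul, Matrix.mul_smul, Matrix.smul_mul]

end BlockForm

theorem posSemidef_genSchur [Finite m] (hM : M.PosSemidef)
    (hG : M.toBlocks₂₂ * G * M.toBlocks₂₂ = M.toBlocks₂₂) : (genSchur M G).PosSemidef := by
  classical
  cases nonempty_fintype m
  rw [genSchur_eq_blockForm hM hG]
  exact posSemidef_blockForm hM _

end GeneralizedSchur

section MinTrace

open scoped MatrixOrder

theorem trace_le_trace {m : Type*} [Fintype m] {A B : Matrix m m ℝ} (h : A ≤ B) :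
    A.trace ≤ B.trace := by
  have : 0 ≤ (B - A).trace := (Matrix.le_iff.mp h).trace_nonneg
  rwa [trace_sub, sub_nonneg] at this

variable {m n : Type*} [Fintype m] [DecidableEq m] [Fintype n] {M : Matrix (m ⊕ n) (m ⊕ n) ℝ}

/-- The least trace of `blockForm M`; for positive semidefinite `M` it is the trace of the
generalized Schur complement, for whatever generalized inverse of the corner. -/
noncomputable def minTrace (M : Matrix (m ⊕ n) (m ⊕ n) ℝ) : ℝ :=
  ⨅ X : Matrix n m ℝ, (blockForm M X).trace

theorem trace_genSchur {G : Matrix n n ℝ} (hM : M.PosSemidef)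
    (hG : M.toBlocks₂₂ * G * M.toBlocks₂₂ = M.toBlocks₂₂) :
    (genSchur M G).trace = minTrace M := by
  have hleast : IsLeast (Set.range fun X => (blockForm M X).trace) (genSchur M G).trace := by
    refine ⟨⟨_, (congrArg trace (genSchur_eq_blockForm hM hG)).symm⟩, ?_⟩
    exact Set.forall_mem_range.mpr fun X => trace_le_trace (genSchur_le_blockForm hM hG X)
  exact hleast.csInf_eq.symm

theorem exists_isMaxOn_minTrace {K : Set (Matrix (m ⊕ n) (m ⊕ n) ℝ)} (hK : IsCompact K)
    (hne : K.Nonempty) (hpos : ∀ M ∈ K, M.PosSemidef) : ∃ M ∈ K, IsMaxOn minTrace K M := by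
  refine UpperSemicontinuousOn.exists_isMaxOn hne hK (upperSemicontinuousOn_ciInf ?_ fun X => ?_)
  · rintro M hM
    exact ⟨0, Set.forall_mem_range.mpr fun X => (posSemidef_blockForm (hpos M hM) X).trace_nonneg⟩
  · have hcont : Continuous fun M : Matrix (m ⊕ n) (m ⊕ n) ℝ => (blockForm M X).trace := by
      unfold blockForm
      fun_prop
    exact hcont.continuousOn.upperSemicontinuousOn

end MinTrace

section Centering

theorem Jmat_eq_vecMulVec (n : Type*) : Jmat n = vecMulVec 1 1 := by
  ext i j
  simp [Jmat, vecMulVec_apply]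

variable {n : Type*} [Fintype n]

/-- `K - K J K / (1ᵀ K 1)`: the quadratic form of `K` with the generalized least squares mean swept
out. The correction is dropped when `1ᵀ K 1 = 0`. -/
noncomputable def centered (K : Matrix n n ℝ) : Matrix n n ℝ :=
  K - (∑ i, ∑ j, K i j)⁻¹ • (K * Jmat n * K)

theorem one_dotProduct_mulVec_one (K : Matrix n n ℝ) : 1 ⬝ᵥ K *ᵥ 1 = ∑ i, ∑ j, K i j := by
  simp [dotProduct, mulVec]

theorem Jmat_mul_mul_Jmat (K : Matrix n n ℝ) :
    Jmat n * K * Jmat n = (∑ i, ∑ j, K i j) • Jmat n := by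
  rw [Jmat_eq_vecMulVec, Matrix.mul_assoc, mul_vecMulVec, vecMulVec_mul_vecMulVec,
    one_dotProduct_mulVec_one, vecMulVec_smul]

theorem posSemidef_centered {K : Matrix n n ℝ} (hK : K.PosSemidef) : (centered K).PosSemidef := by
  classical
  set k := ∑ i, ∑ j, K i j with hk
  have hJ : (Jmat n)ᴴ = Jmat n := by ext; simp [Jmat]
  have hfactor : centered K = (1 - k⁻¹ • (Jmat n * K))ᴴ * K * (1 - k⁻¹ • (Jmat n * K)) := by
    have hKJKJK : K * Jmat n * K * (Jmat n * K) = k • (K * Jmat n * K) := by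
      rw [← Matrix.mul_assoc, Matrix.mul_assoc K, Matrix.mul_assoc K, Jmat_mul_mul_Jmat,
        Matrix.mul_smul, Matrix.smul_mul, ← hk, ← Matrix.mul_assoc]
    simp only [conjTranspose_sub, conjTranspose_one, conjTranspose_smul, conjTranspose_mul,
      hK.isHermitian.eq, hJ, star_trivial, Matrix.sub_mul, Matrix.mul_sub, Matrix.one_mul,
      Matrix.mul_one, Matrix.smul_mul, Matrix.mul_smul, hKJKJK, smul_smul, centered, ← hk]
    have hkk : k⁻¹ * (k⁻¹ * k) = k⁻¹ := by
      simpa only [inv_inv, mul_assoc] using mul_self_mul_inv k⁻¹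
    rw [← Matrix.mul_assoc, smul_sub, smul_smul, hkk, sub_self, sub_zero]
  rw [hfactor]
  exact hK.conjTranspose_mul_mul_same _

theorem centered_mulVec_one {K : Matrix n n ℝ} (hK : K.PosSemidef) : centered K *ᵥ 1 = 0 := by
  set k := ∑ i, ∑ j, K i j with hk
  have hKJK : (K * Jmat n * K) *ᵥ 1 = k • K *ᵥ 1 := by
    rw [← mulVec_mulVec, ← mulVec_mulVec, Jmat_eq_vecMulVec, vecMulVec_mulVec,
      one_dotProduct_mulVec_one, ← hk]
    simp [mulVec_smul]
  rw [centered, sub_mulVec, smul_mulVec, hKJK, smul_smul, ← hk]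
  obtain h0 | h0 := eq_or_ne k 0
  · have : K *ᵥ 1 = 0 := by
      refine (hK.dotProduct_mulVec_zero_iff 1).mp ?_
      rw [star_one, one_dotProduct_mulVec_one, ← hk, h0]
    rw [this, smul_zero, sub_zero]
  · rw [inv_mul_cancel₀ h0, one_smul, sub_self]

theorem posSemidef_Bmat [DecidableEq n] : (Bmat n).PosSemidef := by
  have : Bmat n = centered 1 := by simp [Bmat, centered, Matrix.one_apply]
  rw [this]
  exact posSemidef_centered PosSemidef.one

end Centering

section PermInvariant

open scoped MatrixOrder

variable {n : Type*} [Fintype n]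

/-- Invariance under simultaneous permutations of rows and columns. -/
def PermInvariant {n : Type*} (A : Matrix n n ℝ) : Prop :=
  ∀ σ : Equiv.Perm n, A.submatrix σ σ = A

theorem PermInvariant.exists_forall_ne_eq {n : Type*} {A : Matrix n n ℝ} (hA : PermInvariant A) :
    ∃ e, ∀ i j, i ≠ j → A i j = e := by
  obtain hn | hn := subsingleton_or_nontrivial n
  · exact ⟨0, fun i j hij => (hij (Subsingleton.elim i j)).elim⟩
  obtain ⟨k, l, hkl⟩ := exists_pair_ne n
  have htrans : MulAction.IsMultiplyPretransitive (Equiv.Perm n) n 2 :=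
    Equiv.Perm.isMultiplyPretransitive n 2
  refine ⟨A k l, fun i j hij => ?_⟩
  obtain ⟨σ, rfl, rfl⟩ := MulAction.is_two_pretransitive_iff.mp htrans hkl hij
  exact congrFun₂ (hA σ) k l

theorem PermInvariant.exists_eq_smul_Bmat [DecidableEq n] {A : Matrix n n ℝ}
    (hA : PermInvariant A) (h1 : A *ᵥ 1 = 0) : ∃ c : ℝ, A = c • Bmat n := by
  obtain ⟨e, he⟩ := hA.exists_forall_ne_eq
  refine ⟨-(Fintype.card n * e), ?_⟩
  have hcancel (i : n) : Fintype.card n * e * (Fintype.card n : ℝ)⁻¹ = e := by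
    have : Nonempty n := ⟨i⟩
    field_simp
  have hdiag (i : n) : A i i = e - Fintype.card n * e := by
    have hrow : ∑ j, A i j = 0 := by simpa [mulVec, dotProduct] using congrFun h1 i
    have : ∑ j, (A i j - e) = A i i - e :=
      Fintype.sum_eq_single i fun j hj => sub_eq_zero.mpr (he i j hj.symm)
    rw [Finset.sum_sub_distrib, hrow, Finset.sum_const, Finset.card_univ, nsmul_eq_mul] at this
    linarith
  ext i j
  obtain rfl | hij := eq_or_ne i j
  · simp only [hdiag, Bmat, Jmat, Matrix.smul_apply, Matrix.sub_apply, Matrix.one_apply_eq,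
      Matrix.of_apply, smul_eq_mul]
    linear_combination -hcancel i
  · simp only [he i j hij, Bmat, Jmat, Matrix.smul_apply, Matrix.sub_apply,
      Matrix.one_apply_ne hij, Matrix.of_apply, smul_eq_mul]
    linear_combination -hcancel i

theorem smul_le_smul_of_trace_le {P : Matrix n n ℝ} (hP : P.PosSemidef) {c d : ℝ}
    (h : (c • P).trace ≤ (d • P).trace) : c • P ≤ d • P := by
  obtain h0 | h0 := hP.trace_nonneg.eq_or_lt
  · rw [hP.trace_eq_zero_iff.mp h0.symm, smul_zero, smul_zero]
  · rw [trace_smul, trace_smul, smul_eq_mul, smul_eq_mul] at h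
    exact smul_le_smul_of_nonneg_right (le_of_mul_le_mul_right h h0) hP.nonneg

theorem PermInvariant.le_of_trace_le {A B : Matrix n n ℝ} (hA : PermInvariant A)
    (hA1 : A *ᵥ 1 = 0) (hB : PermInvariant B) (hB1 : B *ᵥ 1 = 0) (h : A.trace ≤ B.trace) :
    A ≤ B := by
  classical
  obtain ⟨c, rfl⟩ := hA.exists_eq_smul_Bmat hA1
  obtain ⟨d, rfl⟩ := hB.exists_eq_smul_Bmat hB1
  exact smul_le_smul_of_trace_le posSemidef_Bmat h

theorem permInvariant_genSchur {M : Matrix (n ⊕ n) (n ⊕ n) ℝ} {G : Matrix n n ℝ}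
    (hM : M.PosSemidef) (hG : M.toBlocks₂₂ * G * M.toBlocks₂₂ = M.toBlocks₂₂)
    (hinv : ∀ σ : Equiv.Perm n, M.submatrix (Sum.map σ σ) (Sum.map σ σ) = M) :
    PermInvariant (genSchur M G) := by
  intro σ
  have hD : M.toBlocks₂₂.submatrix σ σ = M.toBlocks₂₂ := congrArg toBlocks₂₂ (hinv σ)
  have hGσ := submatrix_mul_mul_self hG σ
  rw [hD] at hGσ
  rw [← genSchur_submatrix σ σ, hinv]
  exact genSchur_congr hM hGσ hG

variable [DecidableEq n]

/-- The average of `A` over all simultaneous permutations of rows and columns. -/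
noncomputable def permAverage (A : Matrix n n ℝ) : Matrix n n ℝ :=
  ∑ σ : Equiv.Perm n, ((Fintype.card n).factorial : ℝ)⁻¹ • A.submatrix σ σ

theorem sum_perm_inv_factorial (n : Type*) [Fintype n] [DecidableEq n] :
    ∑ _σ : Equiv.Perm n, ((Fintype.card n).factorial : ℝ)⁻¹ = 1 := by
  rw [Finset.sum_const, Finset.card_univ, Fintype.card_perm, nsmul_eq_mul,
    mul_inv_cancel₀ (by positivity)]

theorem permInvariant_permAverage (A : Matrix n n ℝ) : PermInvariant (permAverage A) := by
  intro τ
  have hτ : (permAverage A).submatrix τ τ =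
      ∑ σ : Equiv.Perm n, ((Fintype.card n).factorial : ℝ)⁻¹ •
        A.submatrix (σ * τ : Equiv.Perm n) (σ * τ : Equiv.Perm n) := by
    ext i j
    simp [permAverage, Matrix.sum_apply]
  rw [hτ]
  exact Equiv.sum_comp (Equiv.mulRight τ) fun σ : Equiv.Perm n => _ • A.submatrix σ σ

theorem posSemidef_permAverage {A : Matrix n n ℝ} (hA : A.PosSemidef) :
    (permAverage A).PosSemidef :=
  posSemidef_sum _ fun σ _ => (hA.submatrix σ).smul (by positivity)

theorem trace_permAverage (A : Matrix n n ℝ) : (permAverage A).trace = A.trace := by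
  have htrace (σ : Equiv.Perm n) : (A.submatrix σ σ).trace = A.trace :=
    Equiv.sum_comp σ fun i => A i i
  simp only [permAverage, trace_sum, trace_smul, htrace]
  rw [← Finset.sum_smul, sum_perm_inv_factorial, one_smul]

theorem permAverage_mulVec_one {A : Matrix n n ℝ} (hA : A *ᵥ 1 = 0) :
    permAverage A *ᵥ 1 = 0 := by
  have hσ (σ : Equiv.Perm n) : A.submatrix σ σ *ᵥ 1 = 0 := by
    rw [submatrix_mulVec_equiv]
    simp [hA]
  simp [permAverage, sum_mulVec, smul_mulVec, hσ]

theorem permAverage_genSchur_le_blockForm {M : Matrix (n ⊕ n) (n ⊕ n) ℝ} {G : Matrix n n ℝ}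
    (hM : M.PosSemidef) (hG : M.toBlocks₂₂ * G * M.toBlocks₂₂ = M.toBlocks₂₂)
    (X : Matrix n n ℝ) :
    permAverage (genSchur M G) ≤ blockForm (∑ σ : Equiv.Perm n,
      ((Fintype.card n).factorial : ℝ)⁻¹ • M.submatrix (Sum.map σ σ) (Sum.map σ σ)) X := by
  have hσ (σ : Equiv.Perm n) := genSchur_submatrix (M := M) (G := G) σ σ
  simp only [permAverage, ← hσ]
  exact sum_smul_genSchur_le_blockForm Finset.univ
    (w := fun _ => ((Fintype.card n).factorial : ℝ)⁻¹) (fun _ _ => by positivity)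
    (M := fun σ : Equiv.Perm n => M.submatrix (Sum.map σ σ) (Sum.map σ σ))
    (G := fun σ => G.submatrix σ σ) (fun σ _ => hM.submatrix (Sum.map σ σ))
    (fun σ _ => submatrix_mul_mul_self hG σ) X

end PermInvariant

section Criteria

open scoped MatrixOrder

theorem isSymm_of_posSemidef {n : Type*} {A : Matrix n n ℝ} (hA : A.PosSemidef) : A.IsSymm :=
  isHermitian_iff_isSymm.mp hA.isHermitian

variable {Φ : Matrix (Fin t) (Fin t) ℝ → ℝ}

theorem GoodPhi.concaveOn (hΦ : GoodPhi t Φ) : ConcaveOn ℝ {A | A.IsSymm} Φ := by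
  refine ⟨fun A hA B hB c d _ _ _ => (hA.smul c).add (hB.smul d), ?_⟩
  intro A hA B hB c d hc hd hcd
  obtain rfl : d = 1 - c := by linarith
  exact hΦ.1 A B hA hB c hc (by linarith)

theorem GoodPhi.le_permAverage (hΦ : GoodPhi t Φ) {A : Matrix (Fin t) (Fin t) ℝ}
    (hA : A.IsSymm) : Φ A ≤ Φ (permAverage A) := calc
  Φ A = ∑ σ : Equiv.Perm (Fin t),
      ((Fintype.card (Fin t)).factorial : ℝ)⁻¹ • Φ (A.submatrix σ σ) := by
    simp only [hΦ.2.2]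
    rw [← Finset.sum_smul, sum_perm_inv_factorial, one_smul]
  _ ≤ Φ (permAverage A) := hΦ.concaveOn.le_map_sum (fun _ _ => by positivity)
    (sum_perm_inv_factorial _) fun σ _ => hA.submatrix σ

theorem GoodPhi.le_of_permAverage_le (hΦ : GoodPhi t Φ) {A B : Matrix (Fin t) (Fin t) ℝ}
    (hA : A.PosSemidef) (hB : B.PosSemidef) (h : permAverage A ≤ B) : Φ A ≤ Φ B := calc
  Φ A ≤ Φ (permAverage A) := hΦ.le_permAverage (isSymm_of_posSemidef hA)
  _ ≤ Φ B := hΦ.2.1 _ _ (isSymm_of_posSemidef (posSemidef_permAverage hA))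
    (isSymm_of_posSemidef hB) (Matrix.le_iff.mp h)

end Criteria

section Design

open scoped MatrixOrder

variable {W : Matrix (Plot a b) (Plot a b) ℝ} {ξ : BlockArray a b t → ℝ}

/-- The joint design matrix `[T_s F_s]` of the treatment and neighbor effects. -/
def jointDesign (s : BlockArray a b t) : Matrix (Plot a b) (Fin t ⊕ Fin t) ℝ :=
  fromCols (Tmat s) (Fmat s)

/-- The joint information matrix `[[C_{ξ00}, C_{ξ01}], [C_{ξ10}, C_{ξ11}]]` of the treatment and
neighbor effects; `InfoMat W ξ G` is its generalized Schur complement. -/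
noncomputable def jointInfo (W : Matrix (Plot a b) (Plot a b) ℝ) (ξ : BlockArray a b t → ℝ) :
    Matrix (Fin t ⊕ Fin t) (Fin t ⊕ Fin t) ℝ :=
  fromBlocks (Cm00 W ξ) (Cm01 W ξ) (Cm01 W ξ)ᵀ (Cm11 W ξ)

theorem jointInfo_eq_sum (hW : W.IsSymm) (ξ : BlockArray a b t → ℝ) :
    jointInfo W ξ = ∑ s, ξ s • ((jointDesign s)ᵀ * W * jointDesign s) := by
  have hs (s : BlockArray a b t) : (jointDesign s)ᵀ * W * jointDesign s =
      fromBlocks (Cs00 W s) (Cs01 W s) (Cs01 W s)ᵀ (Cs11 W s) := by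
    rw [jointDesign, transpose_fromCols, fromRows_mul, fromRows_mul_fromCols]
    simp only [Cs00, Cs01, Cs11, transpose_mul, transpose_transpose, hW.eq, Matrix.mul_assoc]
  ext (i | i) (j | j) <;>
    simp [hs, jointInfo, Cm00, Cm01, Cm11, Matrix.sum_apply]

theorem posSemidef_jointInfo (hW : W.PosSemidef) (hξ : ∀ s, 0 ≤ ξ s) :
    (jointInfo W ξ).PosSemidef := by
  rw [jointInfo_eq_sum (isSymm_of_posSemidef hW)]
  exact posSemidef_sum _ fun s _ =>
    (hW.conjTranspose_mul_mul_same (jointDesign s)).smul (hξ s)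

theorem jointInfo_mulVec_sumElim_one_zero (hW : W.IsSymm) (hW1 : W *ᵥ 1 = 0)
    (ξ : BlockArray a b t → ℝ) : jointInfo W ξ *ᵥ Sum.elim 1 0 = 0 := by
  have hT (s : BlockArray a b t) : jointDesign s *ᵥ Sum.elim 1 0 = 1 := by
    rw [jointDesign, fromCols_mulVec_sumElim, mulVec_zero, add_zero]
    ext q
    simp [Tmat, mulVec, dotProduct]
  simp only [jointInfo_eq_sum hW, sum_mulVec, smul_mulVec, ← mulVec_mulVec, hT, hW1, mulVec_zero,
    smul_zero, Finset.sum_const_zero]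

theorem continuous_jointInfo (hW : W.IsSymm) :
    Continuous (jointInfo W : (BlockArray a b t → ℝ) → _) := by
  simp only [funext (jointInfo_eq_sum hW)]
  fun_prop

theorem jointDesign_perm_submatrix (σ : Equiv.Perm (Fin t)) (s : BlockArray a b t) :
    (jointDesign fun q => σ (s q)).submatrix id (Sum.map σ σ) = jointDesign s := by
  have hT : (Tmat fun q => σ (s q)).submatrix id σ = Tmat s := by
    ext q k
    simp [Tmat]
  ext q (k | k)
  · exact congrFun₂ hT q k
  · exact congrFun₂ (congrArg (Mmat a b * ·) hT) q k

theorem jointInfo_perm (hW : W.IsSymm) (ξ : BlockArray a b t → ℝ) (σ : Equiv.Perm (Fin t)) :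
    jointInfo W (fun s => ξ fun q => σ (s q)) =
      (jointInfo W ξ).submatrix (Sum.map σ σ) (Sum.map σ σ) := by
  let f (s : BlockArray a b t) :=
    ξ s • ((jointDesign s)ᵀ * W * jointDesign s).submatrix (Sum.map σ σ) (Sum.map σ σ)
  calc
    _ = ∑ s : BlockArray a b t, f fun q => σ (s q) := by
      rw [jointInfo_eq_sum hW]
      refine Finset.sum_congr rfl fun s _ => ?_
      rw [← jointDesign_perm_submatrix σ s]
      rfl
    _ = ∑ s, f s := Equiv.sum_comp (Equiv.arrowCongr (Equiv.refl _) σ) f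
    _ = _ := by
      rw [jointInfo_eq_sum hW]
      ext i j
      simp [f, Matrix.sum_apply]

theorem jointInfo_symmetrize (hW : W.IsSymm) (ξ : BlockArray a b t → ℝ) :
    jointInfo W (symmetrize ξ) = ∑ σ : Equiv.Perm (Fin t), (t.factorial : ℝ)⁻¹ •
      (jointInfo W ξ).submatrix (Sum.map σ σ) (Sum.map σ σ) := by
  simp only [← jointInfo_perm hW]
  simp only [jointInfo_eq_sum hW, symmetrize, Finset.smul_sum, smul_smul]
  rw [Finset.sum_comm]
  simp only [← Finset.sum_smul, ← Finset.mul_sum, div_eq_inv_mul]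

theorem isMeasure_symmetrize (hξ : IsMeasure ξ) : IsMeasure (symmetrize ξ) := by
  refine ⟨fun s => div_nonneg (Finset.sum_nonneg fun σ _ => hξ.1 _) (by positivity), ?_⟩
  have hσ (σ : Equiv.Perm (Fin t)) : ∑ s : BlockArray a b t, ξ (fun q => σ (s q)) = 1 :=
    (Equiv.sum_comp (Equiv.arrowCongr (Equiv.refl _) σ) ξ).trans hξ.2
  simp only [symmetrize, ← Finset.sum_div]
  rw [Finset.sum_comm]
  simp [hσ, Fintype.card_perm, Nat.factorial_ne_zero]

theorem isSymmetricMeasure_symmetrize (ξ : BlockArray a b t → ℝ) :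
    IsSymmetricMeasure (symmetrize ξ) := fun τ s =>
  congrArg (· / (t.factorial : ℝ)) <|
    Equiv.sum_comp (Equiv.mulRight τ) fun σ : Equiv.Perm (Fin t) => ξ fun q => σ (s q)

theorem permInvariant_infoMat (hW : W.PosSemidef) (hξ : ∀ s, 0 ≤ ξ s)
    (hsymm : IsSymmetricMeasure ξ) {G : Matrix (Fin t) (Fin t) ℝ} (hG : IsGenInv (Cm11 W ξ) G) :
    PermInvariant (InfoMat W ξ G) := by
  refine permInvariant_genSchur (posSemidef_jointInfo hW hξ) hG fun σ => ?_
  rw [← jointInfo_perm (isSymm_of_posSemidef hW), funext (hsymm σ)]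

theorem isCompact_symmetricMeasures :
    IsCompact {ξ : BlockArray a b t → ℝ | IsMeasure ξ ∧ IsSymmetricMeasure ξ} := by
  have hclosed : IsClosed {ξ : BlockArray a b t → ℝ | ∀ σ : Equiv.Perm (Fin t), ∀ s,
      ξ (fun q => σ (s q)) = ξ s} := by
    simp only [Set.ofPred_forall]
    exact isClosed_iInter fun σ => isClosed_iInter fun s =>
      isClosed_eq (continuous_apply _) (continuous_apply _)
  exact (isCompact_stdSimplex ℝ (BlockArray a b t)).inter_right hclosed

theorem exists_isSymmetricMeasure (a b : ℕ) (ht : 0 < t) :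
    ∃ ξ : BlockArray a b t → ℝ, IsMeasure ξ ∧ IsSymmetricMeasure ξ :=
  ⟨_, isMeasure_symmetrize (single_mem_stdSimplex ℝ fun _ => (⟨0, ht⟩ : Fin t)),
    isSymmetricMeasure_symmetrize _⟩

theorem permAverage_infoMat_le_blockForm (hW : W.PosSemidef) (hξ : ∀ s, 0 ≤ ξ s)
    {G : Matrix (Fin t) (Fin t) ℝ} (hG : IsGenInv (Cm11 W ξ) G) (X : Matrix (Fin t) (Fin t) ℝ) :
    permAverage (InfoMat W ξ G) ≤ blockForm (jointInfo W (symmetrize ξ)) X := by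
  have h := permAverage_genSchur_le_blockForm (posSemidef_jointInfo hW hξ) hG X
  rwa [Fintype.card_fin, ← jointInfo_symmetrize (isSymm_of_posSemidef hW)] at h

theorem permAverage_infoMat_le_infoMat_symmetrize (hW : W.PosSemidef) (hξ : IsMeasure ξ)
    {G Gstar : Matrix (Fin t) (Fin t) ℝ} (hG : IsGenInv (Cm11 W ξ) G)
    (hGstar : IsGenInv (Cm11 W (symmetrize ξ)) Gstar) :
    permAverage (InfoMat W ξ G) ≤ InfoMat W (symmetrize ξ) Gstar := calc
  _ ≤ _ := permAverage_infoMat_le_blockForm hW hξ.1 hG _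
  _ = _ := (genSchur_eq_blockForm (posSemidef_jointInfo hW (isMeasure_symmetrize hξ).1) hGstar).symm

theorem posSemidef_infoMat (hW : W.PosSemidef) (hξ : ∀ s, 0 ≤ ξ s)
    {G : Matrix (Fin t) (Fin t) ℝ} (hG : IsGenInv (Cm11 W ξ) G) : (InfoMat W ξ G).PosSemidef :=
  posSemidef_genSchur (posSemidef_jointInfo hW hξ) hG

theorem infoMat_mulVec_one (hW : W.IsSymm) (hW1 : W *ᵥ 1 = 0) (ξ : BlockArray a b t → ℝ)
    (G : Matrix (Fin t) (Fin t) ℝ) : InfoMat W ξ G *ᵥ 1 = 0 :=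
  genSchur_mulVec_eq_zero (M := jointInfo W ξ) (jointInfo_mulVec_sumElim_one_zero hW hW1 ξ)

theorem trace_infoMat_le_minTrace_symmetrize (hW : W.PosSemidef) (hξ : ∀ s, 0 ≤ ξ s)
    {G : Matrix (Fin t) (Fin t) ℝ} (hG : IsGenInv (Cm11 W ξ) G) :
    (InfoMat W ξ G).trace ≤ minTrace (jointInfo W (symmetrize ξ)) := by
  rw [← trace_permAverage]
  exact le_ciInf fun X => trace_le_trace (permAverage_infoMat_le_blockForm hW hξ hG X)

theorem GoodPhi.infoMat_le_infoMat_symmetrize {Φ : Matrix (Fin t) (Fin t) ℝ → ℝ}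
    (hΦ : GoodPhi t Φ) (hW : W.PosSemidef) (hξ : IsMeasure ξ) {G Gstar : Matrix (Fin t) (Fin t) ℝ}
    (hG : IsGenInv (Cm11 W ξ) G) (hGstar : IsGenInv (Cm11 W (symmetrize ξ)) Gstar) :
    Φ (InfoMat W ξ G) ≤ Φ (InfoMat W (symmetrize ξ) Gstar) :=
  hΦ.le_of_permAverage_le (posSemidef_infoMat hW hξ.1 hG)
    (posSemidef_infoMat hW (isMeasure_symmetrize hξ).1 hGstar)
    (permAverage_infoMat_le_infoMat_symmetrize hW hξ hG hGstar)

theorem univOptimal_of_isMaxOn_minTrace (hW : W.PosSemidef) (hW1 : W *ᵥ 1 = 0)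
    (hξ : IsMeasure ξ) (hsymm : IsSymmetricMeasure ξ)
    (hmax : ∀ η : BlockArray a b t → ℝ, IsMeasure η → IsSymmetricMeasure η →
      minTrace (jointInfo W η) ≤ minTrace (jointInfo W ξ)) : UnivOptimal W ξ := by
  intro η hη G H hG hH Φ hΦ
  have hW' : W.IsSymm := isSymm_of_posSemidef hW
  have htrace : (permAverage (InfoMat W η H)).trace ≤ (InfoMat W ξ G).trace := calc
    _ = (InfoMat W η H).trace := trace_permAverage _
    _ ≤ minTrace (jointInfo W (symmetrize η)) := trace_infoMat_le_minTrace_symmetrize hW hη.1 hH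
    _ ≤ minTrace (jointInfo W ξ) :=
      hmax _ (isMeasure_symmetrize hη) (isSymmetricMeasure_symmetrize η)
    _ = _ := (trace_genSchur (posSemidef_jointInfo hW hξ.1) hG).symm
  have hle : permAverage (InfoMat W η H) ≤ InfoMat W ξ G :=
    (permInvariant_permAverage _).le_of_trace_le
      (permAverage_mulVec_one (infoMat_mulVec_one hW' hW1 η H))
      (permInvariant_infoMat hW hξ.1 hsymm hG) (infoMat_mulVec_one hW' hW1 ξ G) htrace
  exact hΦ.le_of_permAverage_le (posSemidef_infoMat hW hη.1 hH) (posSemidef_infoMat hW hξ.1 hG) hle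

theorem exists_isMaxOn_minTrace_jointInfo (hW : W.PosSemidef) (ht : 0 < t) :
    ∃ ξ : BlockArray a b t → ℝ, IsMeasure ξ ∧ IsSymmetricMeasure ξ ∧
      ∀ η : BlockArray a b t → ℝ, IsMeasure η → IsSymmetricMeasure η →
        minTrace (jointInfo W η) ≤ minTrace (jointInfo W ξ) := by
  have hcont := continuous_jointInfo (t := t) (isSymm_of_posSemidef hW)
  obtain ⟨_, ⟨ξ, hξ, rfl⟩, hmax⟩ := exists_isMaxOn_minTrace
    (isCompact_symmetricMeasures.image hcont)
    (Set.Nonempty.image _ (exists_isSymmetricMeasure a b ht))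
    (Set.forall_mem_image.mpr fun ξ hξ => posSemidef_jointInfo hW hξ.1.1)
  exact ⟨ξ, hξ.1, hξ.2, fun η hη hη' => hmax (Set.mem_image_of_mem _ ⟨hη, hη'⟩)⟩

end Design

theorem exists_symmetric_universally_optimal_general (ht : 0 < t)
    {W : Matrix (Plot a b) (Plot a b) ℝ} (hW : W.PosSemidef) (hW1 : W *ᵥ 1 = 0) :
    (∃ ξ : BlockArray a b t → ℝ, IsMeasure ξ ∧ IsSymmetricMeasure ξ ∧ UnivOptimal W ξ) ∧
    (∀ ξ : BlockArray a b t → ℝ, IsMeasure ξ →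
       IsMeasure (symmetrize ξ) ∧ IsSymmetricMeasure (symmetrize ξ) ∧
       (∀ Φ : Matrix (Fin t) (Fin t) ℝ → ℝ, GoodPhi t Φ →
          ∀ Gstar G : Matrix (Fin t) (Fin t) ℝ,
            IsGenInv (Cm11 W (symmetrize ξ)) Gstar → IsGenInv (Cm11 W ξ) G →
            Φ (InfoMat W ξ G) ≤ Φ (InfoMat W (symmetrize ξ) Gstar))) := by
  refine ⟨?_, fun ξ hξ => ⟨isMeasure_symmetrize hξ, isSymmetricMeasure_symmetrize ξ, ?_⟩⟩
  · obtain ⟨ξ, hξ, hsymm, hmax⟩ := exists_isMaxOn_minTrace_jointInfo hW ht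
    exact ⟨ξ, hξ, hsymm, univOptimal_of_isMaxOn_minTrace hW hW1 hξ hsymm hmax⟩
  · intro Φ hΦ Gstar G hGstar hG
    exact hΦ.infoMat_le_infoMat_symmetrize hW hξ hG hGstar

/-- there is a symmetric universally optimal measure; moreover the
symmetrization of any measure is a symmetric measure whose information matrix dominates
that of the original measure under every criterion `Φ`. -/
theorem exists_symmetric_universally_optimal
    (a b t : ℕ) (ha : 2 ≤ a) (hab : a ≤ b) (hb : 3 ≤ b) (ht : 2 ≤ t)
    (Sig : Matrix (Plot a b) (Plot a b) ℝ) (hSig : Sig.PosDef) :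
    (∃ ξ : BlockArray a b t → ℝ, IsMeasure ξ ∧ IsSymmetricMeasure ξ ∧
       UnivOptimal (Btilde Sig) ξ) ∧
    (∀ ξ : BlockArray a b t → ℝ, IsMeasure ξ →
       IsMeasure (symmetrize ξ) ∧ IsSymmetricMeasure (symmetrize ξ) ∧
       (∀ Φ : Matrix (Fin t) (Fin t) ℝ → ℝ, GoodPhi t Φ →
          ∀ Gstar G : Matrix (Fin t) (Fin t) ℝ,
            IsGenInv (Cm11 (Btilde Sig) (symmetrize ξ)) Gstar →
            IsGenInv (Cm11 (Btilde Sig) ξ) G →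
            Φ (InfoMat (Btilde Sig) ξ G) ≤ Φ (InfoMat (Btilde Sig) (symmetrize ξ) Gstar))) := by
  have hK : (Sig⁻¹).PosSemidef := hSig.posSemidef.inv
  exact exists_symmetric_universally_optimal_general (by omega) (posSemidef_centered hK)
    (centered_mulVec_one hK)

end TwoDim
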